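/- Let f : ℝ → ℝ be continuous, let F : ℝ → ℝ satisfy HasDerivAt F (f x) x for every x, and let g : ℝ → ℝ be twice differentiable at a point x with g'(x) ≠ 0. Then the function x ↦ F(g(x))/g'(x) has derivative at x equal to f(g(x)) − F(g(x))·g''(x)/(g'(x))², i.e. the derivative of F(g(x))/g'(x) differs from f(g(x)) exactly by the term F(g(x))·(1/g'(x))' = −F(g(x))·g''(x)/(g'(x))². -/

import Mathlib

open Real Filter

section

variable {𝕜 𝕜' : Type*} [NontriviallyNormedField 𝕜] [NontriviallyNormedField 𝕜']
  [NormedAlgebra 𝕜 𝕜'] {x : 𝕜}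

theorem hasDerivAt_div_of_hasDerivAt_mul {u v : 𝕜 → 𝕜'} {a v' : 𝕜'}
    (hu : HasDerivAt u (a * v x) x) (hv : HasDerivAt v v' x) (hvx : v x ≠ 0) :
    HasDerivAt (fun y => u y / v y) (a - u x * v' / v x ^ 2) x := by
  have quotient_rule : HasDerivAt (fun y => u y / v y)
      ((a * v x * v x - u x * v') / v x ^ 2) x := hu.fun_div hv hvx
  have cancel : (a * v x * v x - u x * v') / v x ^ 2 = a - u x * v' / v x ^ 2 := by
    field_simp
  rwa [cancel] at quotient_rule

theorem stmt_0_general {F : 𝕜' → 𝕜'} {g g' : 𝕜 → 𝕜'} {f' g'' : 𝕜'}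
    (hF : HasDerivAt F f' (g x))
    (hg : ∀ᶠ y in nhds x, HasDerivAt g (g' y) y)
    (hg' : HasDerivAt g' g'' x)
    (hg'x : g' x ≠ 0) :
    HasDerivAt (fun y => F (g y) / g' y) (f' - F (g x) * g'' / g' x ^ 2) x :=
  have chain_rule : HasDerivAt (fun y => F (g y)) (f' * g' x) x := hF.comp x hg.self_of_nhds
  hasDerivAt_div_of_hasDerivAt_mul chain_rule hg' hg'x

end

theorem stmt_0 (f F g g' : ℝ → ℝ) (x g'' : ℝ)
    (hf : Continuous f)
    (hF : ∀ y, HasDerivAt F (f y) y)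
    (hg : ∀ᶠ y in nhds x, HasDerivAt g (g' y) y)
    (hg' : HasDerivAt g' g'' x)
    (hg'x : g' x ≠ 0) :
    HasDerivAt (fun y => F (g y) / g' y)
      (f (g x) - F (g x) * g'' / (g' x) ^ 2) x :=
  stmt_0_general (hF (g x)) hg hg' hg'x
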